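/- Let X be a real Banach space and let C, D ⊆ X be nonempty convex sets such that C is compact and D is simultaneously approximatively compact. Then C + D is simultaneously approximatively compact. -/

import Mathlib

open Filter Topology Pointwise

variable {X : Type*} [NormedAddCommGroup X] [NormedSpace ℝ X]

/-- `simSup A y = sup_{a ∈ A} ‖a - y‖`. -/
noncomputable def simSup (A : Set X) (y : X) : ℝ := ⨆ a : A, ‖(a : X) - y‖

/-- `simDist A C = inf_{y ∈ C} sup_{a ∈ A} ‖a - y‖`. -/
noncomputable def simDist (A C : Set X) : ℝ := ⨅ y : C, simSup A (y : X)

/-- The set of best simultaneous approximations `P_C(A)`. -/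
def simBest (A C : Set X) : Set X := {y | y ∈ C ∧ simSup A y = simDist A C}

/-- The set `P_C(A, δ)`. -/
def simBestApprox (A C : Set X) (δ : ℝ) : Set X :=
  {y | y ∈ C ∧ simSup A y < simDist A C + δ}

/-- `C` is simultaneously proximinal. -/
def SimProximinal (C : Set X) : Prop :=
  ∀ A : Set X, A.Nonempty → Bornology.IsBounded A → (simBest A C).Nonempty

/-- `y` is a minimizing sequence in `C` for `A`. -/
def IsMinimizing (A C : Set X) (y : ℕ → X) : Prop :=
  (∀ n, y n ∈ C) ∧ Tendsto (fun n => simSup A (y n)) atTop (𝓝 (simDist A C))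

/-- Weak convergence of a sequence. -/
def WeakTendsto (y : ℕ → X) (c : X) : Prop :=
  ∀ f : X →L[ℝ] ℝ, Tendsto (fun n => f (y n)) atTop (𝓝 (f c))

/-- `C` is simultaneously approximatively compact. -/
def SimApproxCompact (C : Set X) : Prop :=
  ∀ A : Set X, A.Nonempty → Bornology.IsBounded A → ∀ y : ℕ → X, IsMinimizing A C y →
    ∃ c ∈ C, ∃ φ : ℕ → ℕ, StrictMono φ ∧ Tendsto (y ∘ φ) atTop (𝓝 c)

/-- `C` is simultaneously approximatively weakly compact. -/
def SimApproxWeakCompact (C : Set X) : Prop :=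
  ∀ A : Set X, A.Nonempty → Bornology.IsBounded A → ∀ y : ℕ → X, IsMinimizing A C y →
    ∃ c ∈ C, ∃ φ : ℕ → ℕ, StrictMono φ ∧ WeakTendsto (y ∘ φ) c

/-- `C` is simultaneously strongly proximinal. -/
def SimStronglyProximinal (C : Set X) : Prop :=
  SimProximinal C ∧ ∀ A : Set X, A.Nonempty → Bornology.IsBounded A → ∀ ε > (0 : ℝ),
    ∃ δ > (0 : ℝ), simBestApprox A C δ ⊆ simBest A C + Metric.closedBall (0 : X) ε

/-- `C` is simultaneously weakly strongly proximinal. -/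
def SimWeakStronglyProximinal (C : Set X) : Prop :=
  SimProximinal C ∧ ∀ A : Set X, A.Nonempty → Bornology.IsBounded A →
    ∀ V : Set X, V ∈ 𝓝 (0 : WeakSpace ℝ X) → ∃ δ > (0 : ℝ),
      simBestApprox A C δ ⊆ simBest A C + V

/-!
Write a minimizing sequence in `C + D` for `A` as `y n = c n + d n`; by compactness, `c n → c ∈ C`
along a subsequence. Since `simSup A` is 1-Lipschitz, `c + d n` is then minimizing as well; as it
lies in the translate `c + D`, which is contained in `C + D`, it is minimizing for `A` in `c + D`.
Simultaneous approximative compactness is translation invariant, so `c + d n` has a convergent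
subsequence, and so does `y`, being asymptotic to it.
-/

section

variable {E : Type*} [NormedAddCommGroup E] {A C D : Set E} {y z : ℕ → E}

lemma norm_sub_le_simSup (hA : Bornology.IsBounded A) {a : E} (ha : a ∈ A) (x : E) :
    ‖a - x‖ ≤ simSup A x := by
  have hbdd : BddAbove (Set.range fun b : A => ‖(b : E) - x‖) := by
    obtain ⟨R, hR⟩ := (Metric.isBounded_iff_subset_closedBall x).1 hA
    refine ⟨R, ?_⟩
    rintro _ ⟨b, rfl⟩
    exact mem_closedBall_iff_norm.1 (hR b.2)
  exact le_ciSup hbdd ⟨a, ha⟩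

lemma simSup_nonneg (A : Set E) (x : E) : 0 ≤ simSup A x :=
  Real.iSup_nonneg fun _ => norm_nonneg _

lemma lipschitzWith_simSup (hA : Bornology.IsBounded A) : LipschitzWith 1 (simSup A) := by
  refine LipschitzWith.of_le_add fun x x' => Real.iSup_le (fun a => ?_)
    (add_nonneg (simSup_nonneg A x') dist_nonneg)
  calc ‖(a : E) - x‖ ≤ ‖(a : E) - x'‖ + ‖x' - x‖ := norm_sub_le_norm_sub_add_norm_sub _ _ _
    _ ≤ simSup A x' + dist x x' := by
      rw [dist_eq_norm_sub' x x']
      gcongr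
      exact norm_sub_le_simSup hA a.2 x'

lemma simDist_le_simSup (A : Set E) {x : E} (hx : x ∈ C) : simDist A C ≤ simSup A x :=
  ciInf_le (f := fun c : C => simSup A (c : E))
    ⟨0, Set.forall_mem_range.2 fun c => simSup_nonneg A c⟩ ⟨x, hx⟩

lemma simDist_anti (A : Set E) (hD : D.Nonempty) (hDC : D ⊆ C) : simDist A C ≤ simDist A D :=
  have := hD.to_subtype
  le_ciInf fun x => simDist_le_simSup A (hDC x.2)

lemma simSup_vadd (c : E) (A : Set E) (x : E) : simSup (c +ᵥ A) (c +ᵥ x) = simSup A x := by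
  unfold simSup
  rw [← sSup_image' (f := fun a => ‖a - (c +ᵥ x)‖), ← sSup_image' (f := fun a => ‖a - x‖),
    ← Set.image_vadd, Set.image_image]
  simp only [vadd_eq_add, add_sub_add_left_eq_sub]

lemma simDist_vadd (c : E) (A C : Set E) : simDist (c +ᵥ A) (c +ᵥ C) = simDist A C := by
  unfold simDist
  rw [← sInf_image' (f := simSup (c +ᵥ A)), ← sInf_image' (f := simSup A),
    ← Set.image_vadd (t := C), Set.image_image]
  simp only [simSup_vadd]

namespace IsMinimizing

lemma comp_tendsto (hy : IsMinimizing A C y) {φ : ℕ → ℕ} (hφ : Tendsto φ atTop atTop) :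
    IsMinimizing A C (y ∘ φ) :=
  ⟨fun n => hy.1 (φ n), hy.2.comp hφ⟩

lemma of_tendsto_dist (hA : Bornology.IsBounded A) (hy : IsMinimizing A C y)
    (hz : ∀ n, z n ∈ C) (hyz : Tendsto (fun n => dist (y n) (z n)) atTop (𝓝 0)) :
    IsMinimizing A C z := by
  refine ⟨hz, hy.2.congr_dist <| squeeze_zero (fun _ => dist_nonneg) (fun n => ?_) hyz⟩
  simpa only [NNReal.coe_one, one_mul] using (lipschitzWith_simSup hA).dist_le_mul (y n) (z n)

lemma of_subset (hy : IsMinimizing A C y) (hDC : D ⊆ C) (hyD : ∀ n, y n ∈ D) :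
    IsMinimizing A D y := by
  have hdist : simDist A D = simDist A C :=
    le_antisymm (ge_of_tendsto' hy.2 fun n => simDist_le_simSup A (hyD n))
      (simDist_anti A ⟨y 0, hyD 0⟩ hDC)
  exact ⟨hyD, hdist ▸ hy.2⟩

lemma vadd (hy : IsMinimizing A C y) (c : E) : IsMinimizing (c +ᵥ A) (c +ᵥ C) (c +ᵥ y) := by
  refine ⟨fun n => Set.vadd_mem_vadd_set (hy.1 n), ?_⟩
  simpa only [Pi.vadd_apply, simSup_vadd, simDist_vadd] using hy.2

end IsMinimizing

lemma SimApproxCompact.vadd (hC : SimApproxCompact C) (c : E) : SimApproxCompact (c +ᵥ C) := by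
  intro A hAne hA y hy
  have hy' : IsMinimizing (-c +ᵥ A) C (-c +ᵥ y) := by
    simpa only [neg_vadd_vadd] using hy.vadd (-c)
  obtain ⟨x, hx, φ, hφ, hlim⟩ := hC _ hAne.vadd_set (hA.vadd (-c)) _ hy'
  refine ⟨c +ᵥ x, Set.vadd_mem_vadd_set hx, φ, hφ, ?_⟩
  simpa only [Function.comp_def, Pi.vadd_apply, vadd_neg_vadd] using hlim.const_vadd c

theorem compact_add_simApproxCompact_general (hC : IsCompact C) (hD : SimApproxCompact D) :
    SimApproxCompact (C + D) := by
  intro A hAne hA y hy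
  choose c hc d hd hcd using fun n => Set.mem_add.1 (hy.1 n)
  obtain ⟨c₀, hc₀, φ, hφ, hcφ⟩ := hC.tendsto_subseq hc
  let z : ℕ → E := fun n => c₀ + d (φ n)
  have hz_mem : ∀ n, z n ∈ c₀ +ᵥ D := fun n => Set.vadd_mem_vadd_set (hd (φ n))
  have hsub : c₀ +ᵥ D ⊆ C + D := Set.vadd_set_subset_add hc₀
  have hyz : Tendsto (fun n => dist ((y ∘ φ) n) (z n)) atTop (𝓝 0) := by
    simpa only [Function.comp_apply, z, ← hcd, dist_add_right] using
      tendsto_iff_dist_tendsto_zero.1 hcφ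
  have hz : IsMinimizing A (C + D) z :=
    (hy.comp_tendsto hφ.tendsto_atTop).of_tendsto_dist hA (fun n => hsub (hz_mem n)) hyz
  obtain ⟨x, hx, ψ, hψ, hzψ⟩ := hD.vadd c₀ A hAne hA z (hz.of_subset hsub hz_mem)
  exact ⟨x, hsub hx, φ ∘ ψ, hφ.comp hψ,
    (tendsto_iff_of_dist (hyz.comp hψ.tendsto_atTop)).2 hzψ⟩

end

/-- The sum of a compact convex set and a simultaneously approximatively compact convex set is
simultaneously approximatively compact. -/
theorem compact_add_simApproxCompact [CompleteSpace X]
    (C D : Set X) (hCne : C.Nonempty) (hDne : D.Nonempty)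
    (hCc : Convex ℝ C) (hDc : Convex ℝ D)
    (hC : IsCompact C) (hD : SimApproxCompact D) :
    SimApproxCompact (C + D) :=
  compact_add_simApproxCompact_general hC hD
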